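/- Let σ² > 0 and Py ≥ σ² be real numbers, and set P₀ := gaussianReal 0 σ² and P₁ := gaussianReal 0 Py. Then for every measurable set A ⊆ ℝ, the sum of the false-positive and miss-detection probabilities satisfies (P₀ A).toReal + (P₁ Aᶜ).toReal ≥ 1 - Real.sqrt ((klDiv P₀ P₁).toReal / 2) ≥ 1 - Real.sqrt ((klDiv P₁ P₀).toReal / 2). -/

import Mathlib

open MeasureTheory ProbabilityTheory
open scoped ENNReal NNReal Classical

/-- Kullback–Leibler divergence of `μ` from `ν`: `∫ log (dμ/dν) dμ` when `μ ≪ ν` and the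
log-likelihood ratio is `μ`-integrable, and `∞` otherwise. -/
noncomputable def klDiv {α : Type*} [MeasurableSpace α] (μ ν : Measure α) : ℝ≥0∞ :=
  if μ ≪ ν ∧ Integrable (llr μ ν) μ then ENNReal.ofReal (∫ x, llr μ ν x ∂μ) else ⊤

/-- Nonnegativity of the relative entropy between probability measures. -/
lemma integral_llr_nonneg {α : Type*} [MeasurableSpace α] {μ ν : Measure α}
    [IsProbabilityMeasure μ] [IsProbabilityMeasure ν] (hμν : μ ≪ ν)
    (h_int : Integrable (llr μ ν) μ) : 0 ≤ ∫ x, llr μ ν x ∂μ := by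
  simpa using InformationTheory.integral_llr_add_sub_measure_univ_nonneg hμν h_int

/-- The Donsker–Varadhan inequality. -/
lemma integral_sub_log_integral_exp_le_integral_llr {α : Type*} [MeasurableSpace α]
    {μ ν : Measure α} [IsProbabilityMeasure μ] [IsProbabilityMeasure ν] {f : α → ℝ}
    (hμν : μ ≪ ν) (h_int : Integrable (llr μ ν) μ) (hfμ : Integrable f μ)
    (hfν : Integrable (fun x ↦ Real.exp (f x)) ν) :
    ∫ x, f x ∂μ - Real.log (∫ x, Real.exp (f x) ∂ν) ≤ ∫ x, llr μ ν x ∂μ := by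
  have := isProbabilityMeasure_tilted hfν
  have h := integral_llr_nonneg (hμν.trans (absolutelyContinuous_tilted hfν))
    (integrable_llr_tilted_right hμν hfμ h_int hfν)
  rw [integral_llr_tilted_right hμν hfμ hfν h_int] at h
  linarith

/-- **Pinsker's inequality**, in squared form. -/
lemma two_mul_sq_measureReal_sub_le_integral_llr {α : Type*} [MeasurableSpace α]
    {μ ν : Measure α} [IsProbabilityMeasure μ] [IsProbabilityMeasure ν]
    (hμν : μ ≪ ν) (h_int : Integrable (llr μ ν) μ) {A : Set α} (hA : MeasurableSet A) :
    2 * (μ.real A - ν.real A) ^ 2 ≤ ∫ x, llr μ ν x ∂μ := by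
  set X : α → ℝ := A.indicator 1 with hX
  have hXm : Measurable X := measurable_one.indicator hA
  have hXI : ∀ x, X x ∈ Set.Icc (0 : ℝ) 1 := fun x ↦ by
    by_cases hx : x ∈ A <;> simp [hX, hx]
  have hXμ : Integrable X μ := (integrable_const (1 : ℝ)).indicator hA
  have hsub := hasSubgaussianMGF_of_mem_Icc (μ := ν) hXm.aemeasurable (ae_of_all _ hXI)
  have hμX : ∫ x, X x ∂μ = μ.real A := integral_indicator_one hA
  have hνX : ∫ x, X x ∂ν = ν.real A := integral_indicator_one hA
  rw [hνX] at hsub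
  set t := 4 * (μ.real A - ν.real A) with ht
  have hmgf := hsub.mgf_le t
  have hlog : Real.log (∫ x, Real.exp (t * (X x - ν.real A)) ∂ν) ≤ t ^ 2 / 8 := by
    rw [Real.log_le_iff_le_exp (integral_exp_pos (hsub.integrable_exp_mul t))]
    refine hmgf.trans_eq ?_
    congr 1
    simp
    ring
  have hdv := integral_sub_log_integral_exp_le_integral_llr hμν h_int
    ((hXμ.sub (integrable_const (ν.real A))).const_mul t) (hsub.integrable_exp_mul t)
  have hint : ∫ x, t * (X x - ν.real A) ∂μ = t * (μ.real A - ν.real A) := by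
    rw [integral_const_mul, integral_sub hXμ (integrable_const _), hμX]
    simp
  simp only [Pi.sub_apply] at hdv
  rw [hint] at hdv
  nlinarith

lemma gaussianReal_absolutelyContinuous_gaussianReal (m m' : ℝ) {v w : ℝ≥0}
    (hv : v ≠ 0) (hw : w ≠ 0) : gaussianReal m v ≪ gaussianReal m' w :=
  (gaussianReal_absolutelyContinuous m hv).trans (gaussianReal_absolutelyContinuous' m' hw)

lemma llr_gaussianReal_zero {v w : ℝ≥0} (hv : v ≠ 0) (hw : w ≠ 0) :
    llr (gaussianReal 0 v) (gaussianReal 0 w) =ᵐ[gaussianReal 0 v]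
      fun x ↦ Real.log (w / v) / 2 + ((w : ℝ)⁻¹ - (v : ℝ)⁻¹) / 2 * x ^ 2 := by
  have hvol := gaussianReal_absolutelyContinuous 0 hv
  have hvw := gaussianReal_absolutelyContinuous_gaussianReal 0 0 hv hw
  filter_upwards [hvw.ae_le (Measure.rnDeriv_eq_div (ξ := volume) hvol
      (gaussianReal_absolutelyContinuous 0 hw)),
    hvol.ae_le (rnDeriv_gaussianReal 0 v), hvol.ae_le (rnDeriv_gaussianReal 0 w)]
    with x hx hxv hxw
  have hv' : (0 : ℝ) < v := by positivity
  have hw' : (0 : ℝ) < w := by positivity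
  rw [llr, hx, hxv, hxw, ENNReal.toReal_div, toReal_gaussianPDF, toReal_gaussianPDF,
    Real.log_div (gaussianPDFReal_pos _ _ _ hv).ne' (gaussianPDFReal_pos _ _ _ hw).ne',
    gaussianPDFReal, gaussianPDFReal, Real.log_mul (by positivity) (by positivity),
    Real.log_mul (by positivity) (by positivity), Real.log_exp, Real.log_exp, Real.log_inv,
    Real.log_inv, Real.log_sqrt (by positivity), Real.log_sqrt (by positivity),
    Real.log_mul (by positivity) hv'.ne', Real.log_mul (by positivity) hw'.ne',
    Real.log_div hw'.ne' hv'.ne']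
  field_simp
  ring

lemma integrable_sq_gaussianReal (m : ℝ) (v : ℝ≥0) :
    Integrable (fun x ↦ x ^ 2) (gaussianReal m v) :=
  (memLp_id_gaussianReal 2).integrable_sq

lemma integral_sq_gaussianReal_zero (v : ℝ≥0) : ∫ x, x ^ 2 ∂(gaussianReal 0 v) = v := by
  have h := variance_fun_id_gaussianReal (μ := 0) (v := v)
  rwa [variance_of_integral_eq_zero (by fun_prop) (by simp)] at h

lemma integrable_llr_gaussianReal_zero {v w : ℝ≥0} (hv : v ≠ 0) (hw : w ≠ 0) :
    Integrable (llr (gaussianReal 0 v) (gaussianReal 0 w)) (gaussianReal 0 v) :=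
  (integrable_congr (llr_gaussianReal_zero hv hw)).2
    ((integrable_const _).add ((integrable_sq_gaussianReal 0 v).const_mul _))

lemma integral_llr_gaussianReal_zero {v w : ℝ≥0} (hv : v ≠ 0) (hw : w ≠ 0) :
    ∫ x, llr (gaussianReal 0 v) (gaussianReal 0 w) x ∂(gaussianReal 0 v) =
      (Real.log (w / v) + v / w - 1) / 2 := by
  rw [integral_congr_ae (llr_gaussianReal_zero hv hw), integral_add (integrable_const _)
    ((integrable_sq_gaussianReal 0 v).const_mul _), integral_const_mul,
    integral_sq_gaussianReal_zero]
  simp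
  field_simp
  ring

lemma toReal_klDiv_gaussianReal_zero {v w : ℝ≥0} (hv : v ≠ 0) (hw : w ≠ 0) :
    (klDiv (gaussianReal 0 v) (gaussianReal 0 w)).toReal =
      ∫ x, llr (gaussianReal 0 v) (gaussianReal 0 w) x ∂(gaussianReal 0 v) := by
  have hac := gaussianReal_absolutelyContinuous_gaussianReal 0 0 hv hw
  have h_int := integrable_llr_gaussianReal_zero hv hw
  rw [klDiv, if_pos ⟨hac, h_int⟩, ENNReal.toReal_ofReal (integral_llr_nonneg hac h_int)]

lemma toReal_klDiv_gaussianReal_zero_le_swap {v w : ℝ≥0} (hv : 0 < v) (hvw : v ≤ w) :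
    (klDiv (gaussianReal 0 v) (gaussianReal 0 w)).toReal ≤
      (klDiv (gaussianReal 0 w) (gaussianReal 0 v)).toReal := by
  have hw := hv.trans_le hvw
  rw [toReal_klDiv_gaussianReal_zero hv.ne' hw.ne', toReal_klDiv_gaussianReal_zero hw.ne' hv.ne',
    integral_llr_gaussianReal_zero hv.ne' hw.ne', integral_llr_gaussianReal_zero hw.ne' hv.ne']
  have hv' : (0 : ℝ) < v := hv
  have hr : (1 : ℝ) ≤ w / v := (one_le_div hv').2 (by exact_mod_cast hvw)
  have h := Real.self_le_sinh_iff.2 (Real.log_nonneg hr)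
  rw [Real.sinh_log (by linarith), inv_div] at h
  have hlog : Real.log ((v : ℝ) / w) = -Real.log (w / v) := by rw [← Real.log_inv, inv_div]
  rw [hlog]
  linarith

/-- Corollary 2: for any detector (decision region `A`), the detection error probability is
bounded below by `1 - √(D(p₀‖p₁)/2) ≥ 1 - √(D(p₁‖p₀)/2)`. -/
theorem stmt_11 (σ2 Py : ℝ≥0) (hσ : 0 < σ2) (hle : σ2 ≤ Py)
    (P₀ : Measure ℝ) (P₁ : Measure ℝ)
    (hP₀ : P₀ = gaussianReal 0 σ2) (hP₁ : P₁ = gaussianReal 0 Py) :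
    ∀ A : Set ℝ, MeasurableSet A →
      1 - Real.sqrt ((klDiv P₀ P₁).toReal / 2) ≤ (P₀ A).toReal + (P₁ Aᶜ).toReal ∧
      1 - Real.sqrt ((klDiv P₁ P₀).toReal / 2) ≤ 1 - Real.sqrt ((klDiv P₀ P₁).toReal / 2) := by
  subst hP₀ hP₁
  have hPy := hσ.trans_le hle
  intro A hA
  refine ⟨?_, ?_⟩
  · have hpin := two_mul_sq_measureReal_sub_le_integral_llr
      (gaussianReal_absolutelyContinuous_gaussianReal 0 0 hσ.ne' hPy.ne')
      (integrable_llr_gaussianReal_zero hσ.ne' hPy.ne') hA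
    rw [← toReal_klDiv_gaussianReal_zero hσ.ne' hPy.ne'] at hpin
    have hcompl := probReal_compl_eq_one_sub (μ := gaussianReal 0 Py) hA
    have hle_sqrt : (gaussianReal 0 Py).real A - (gaussianReal 0 σ2).real A ≤
        √((klDiv (gaussianReal 0 σ2) (gaussianReal 0 Py)).toReal / 2) :=
      Real.le_sqrt_of_sq_le (by nlinarith)
    simp only [measureReal_def] at hcompl hle_sqrt
    linarith
  · have hswap := toReal_klDiv_gaussianReal_zero_le_swap hσ hle
    exact sub_le_sub_left (Real.sqrt_le_sqrt (by linarith)) 1
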